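/- arXiv:2404.15407 — 4 statements merged into one kernel-verified Lean document; each statement's English description precedes it below -/
import Mathlib

section
/- In the orthonormal chain basis indexed by positively oriented k-simplices, the matrix elements of the full weighted combinatorial Laplacian are: (Δ_k)_{σ,σ'} = Σ_{u∈up(σ)} w(u)² + Σ_{v∈σ} w(v)² if σ = σ'; = w(v_σ)w(v_{σ'}) if σ ∼↓ σ' and σ ≁↑ σ̄'; = −w(v_σ)w(v_{σ'}) if σ ∼↓ σ̄' and σ ≁↑ σ'; = 0 otherwise, for all σ, σ' ∈ X_k^+. -/
open BigOperators Matrix Kronecker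

attribute [local instance] Classical.propDecidable

noncomputable section

namespace QWSC

/-- A finite abstract simplicial complex on the vertex set `Fin n`:
a family of vertex sets closed under taking subsets. -/
def IsComplex (n : ℕ) (X : Finset (Finset (Fin n))) : Prop :=
  ∀ s ∈ X, ∀ t ⊆ s, t ∈ X

/-- The weighted boundary operator `∂_k : C_k → C_{k-1}` written as a matrix in the
orthonormal chain bases (rows are indexed by `(k-1)`-simplices, columns by `k`-simplices;
a `k`-simplex has `k+1` vertices).  On the orthonormal basis vector of
`σ = {v_0 < … < v_k}` it has entries `(-1)^j w(v_j)` at the face `σ \ {v_j}`. -/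
def boundary (n : ℕ) (X : Finset (Finset (Fin n))) (w : Fin n → ℝ) (k : ℕ) :
    Matrix (Finset (Fin n)) (Finset (Fin n)) ℝ :=
  Matrix.of fun τ σ =>
    if σ ∈ X ∧ σ.card = k + 1 ∧ τ ⊆ σ ∧ τ.card = k then
      ∑ v ∈ σ \ τ, (-1 : ℝ) ^ ((σ.filter fun u => u < v).card) * w v
    else 0

/-- The weighted up Laplacian `Δ_k^{up} = ∂_{k+1} ∂_{k+1}^*`. -/
def upLap (n : ℕ) (X : Finset (Finset (Fin n))) (w : Fin n → ℝ) (k : ℕ) :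
    Matrix (Finset (Fin n)) (Finset (Fin n)) ℝ :=
  boundary n X w (k + 1) * (boundary n X w (k + 1))ᵀ

/-- The weighted down Laplacian `Δ_k^{down} = ∂_k^* ∂_k`. -/
def downLap (n : ℕ) (X : Finset (Finset (Fin n))) (w : Fin n → ℝ) (k : ℕ) :
    Matrix (Finset (Fin n)) (Finset (Fin n)) ℝ :=
  (boundary n X w k)ᵀ * boundary n X w k

/-- The weighted combinatorial Laplacian `Δ_k = Δ_k^{up} + Δ_k^{down}`. -/
def fullLap (n : ℕ) (X : Finset (Finset (Fin n))) (w : Fin n → ℝ) (k : ℕ) :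
    Matrix (Finset (Fin n)) (Finset (Fin n)) ℝ :=
  upLap n X w k + downLap n X w k

/-- `true` iff removing the vertex `v` from `σ` reverses the induced orientation,
i.e. the position of `v` in the increasing ordering of `σ` is odd. -/
def faceFlip (n : ℕ) (σ : Finset (Fin n)) (v : Fin n) : Bool :=
  decide ((σ.filter fun u => u < v).card % 2 = 1)

/-- An oriented simplex: a vertex set together with an orientation bit
(`false` = positively oriented, `true` = negatively oriented). -/
abbrev OSimp (n : ℕ) := Finset (Fin n) × Bool

/-- Up-adjacency `σ ∼↑ σ'` of oriented simplices: the vertex sets are distinct, their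
union is a common coface belonging to `X`, and the orientations induced on the common
coface by `σ` and by `σ'` agree. -/
def UpAdj (n : ℕ) (X : Finset (Finset (Fin n))) (σ σ' : OSimp n) : Prop :=
  σ.1 ≠ σ'.1 ∧ σ.1 ∪ σ'.1 ∈ X ∧ (σ.1 ∪ σ'.1).card = σ.1.card + 1 ∧
    σ'.1.card = σ.1.card ∧
    ∀ v ∈ σ'.1 \ σ.1, ∀ v' ∈ σ.1 \ σ'.1,
      xor σ.2 (faceFlip n (σ.1 ∪ σ'.1) v) = xor σ'.2 (faceFlip n (σ.1 ∪ σ'.1) v')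

/-- Down-adjacency `σ ∼↓ σ'` of oriented simplices: the vertex sets are distinct, they
share a common face (their intersection, of cardinality one less), and the orientations
induced on the common face by `σ` and by `σ'` agree. -/
def DownAdj (n : ℕ) (σ σ' : OSimp n) : Prop :=
  σ.1 ≠ σ'.1 ∧ (σ.1 ∩ σ'.1).card + 1 = σ.1.card ∧ σ'.1.card = σ.1.card ∧
    ∀ v ∈ σ.1 \ σ'.1, ∀ v' ∈ σ'.1 \ σ.1,
      xor σ.2 (faceFlip n σ.1 v) = xor σ'.2 (faceFlip n σ'.1 v')

/-- `up(σ)`: the vertices `u ∉ σ` with `σ ∪ {u} ∈ X`. -/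
def upSet (n : ℕ) (X : Finset (Finset (Fin n))) (σ : Finset (Fin n)) : Finset (Fin n) :=
  Finset.univ.filter fun u => u ∉ σ ∧ insert u σ ∈ X

/-- The set of `k`-simplices of `X` (those with `k+1` vertices). -/
def simplices (n : ℕ) (X : Finset (Finset (Fin n))) (k : ℕ) : Finset (Finset (Fin n)) :=
  X.filter fun s => s.card = k + 1

/-- Normalization constant `K^{up} = max_{σ∈X_k} Σ_{u∈V∖σ} Σ_{v∈σ∪{u}} w(u)w(v)`. -/
def Kup (n : ℕ) (X : Finset (Finset (Fin n))) (w : Fin n → ℝ) (k : ℕ) : ℝ :=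
  sSup {x : ℝ | ∃ σ ∈ X, σ.card = k + 1 ∧ x = ∑ u ∈ σᶜ, ∑ v ∈ insert u σ, w u * w v}

/-- Normalization constant `K^{down} = max_{σ∈X_k} Σ_{u∈σ} Σ_{v∈V∖(σ∖{u})} w(u)w(v)`. -/
def Kdown (n : ℕ) (X : Finset (Finset (Fin n))) (w : Fin n → ℝ) (k : ℕ) : ℝ :=
  sSup {x : ℝ | ∃ σ ∈ X, σ.card = k + 1 ∧ x = ∑ u ∈ σ, ∑ v ∈ (σ.erase u)ᶜ, w u * w v}

/-- Normalization constant `K = max_{σ∈X_k} (Σ_{v∈V} w(v)² + Σ_{u∈V∖σ} Σ_{v∈σ} w(u)w(v))`. -/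
def Kfull (n : ℕ) (X : Finset (Finset (Fin n))) (w : Fin n → ℝ) (k : ℕ) : ℝ :=
  sSup {x : ℝ | ∃ σ ∈ X, σ.card = k + 1 ∧
    x = (∑ v : Fin n, w v ^ 2) + ∑ u ∈ σᶜ, ∑ v ∈ σ, w u * w v}

/-- The `k`-th chain space `C_k`: the span of the basis vectors indexed by
`k`-simplices of `X`, inside the coordinate space of the orthonormal chain basis. -/
def chainSpace (n : ℕ) (X : Finset (Finset (Fin n))) (k : ℕ) :
    Submodule ℝ (Finset (Fin n) → ℝ) :=
  Submodule.span ℝ ((fun σ => Pi.single σ (1 : ℝ)) '' {σ | σ ∈ X ∧ σ.card = k + 1})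

/-- The state space `S_k = X_k^± ∪ {Θ}` of the walks; `none` is the absorbing state `Θ`. -/
abbrev SState (n : ℕ) := Option (OSimp n)

/-- A state is a member of `S_k`: either the absorbing state, or an oriented
`k`-simplex of `X`. -/
def valid (n : ℕ) (X : Finset (Finset (Fin n))) (k : ℕ) : SState n → Prop
  | none => True
  | some σ => σ.1 ∈ X ∧ σ.1.card = k + 1

/-- `η^{up}_σ = 1 − (1/K^{up}) Σ_{τ∈X_k^+} |(Δ_k^{up})_{τ,σ_+}|`. -/
def etaUp (n : ℕ) (X : Finset (Finset (Fin n))) (w : Fin n → ℝ) (k : ℕ) (σ : OSimp n) : ℝ :=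
  1 - (∑ τ ∈ simplices n X k, |upLap n X w k τ σ.1|) / Kup n X w k

/-- `η^{down}_σ = 1 − (1/K^{down}) Σ_{τ∈X_k^+} |(Δ_k^{down})_{τ,σ_+}|`. -/
def etaDown (n : ℕ) (X : Finset (Finset (Fin n))) (w : Fin n → ℝ) (k : ℕ) (σ : OSimp n) : ℝ :=
  1 - (∑ τ ∈ simplices n X k, |downLap n X w k τ σ.1|) / Kdown n X w k

/-- `η_σ = 1 − (1/K) Σ_{τ∈X_k^+} |(Δ_k)_{τ,σ_+}|`. -/
def etaFull (n : ℕ) (X : Finset (Finset (Fin n))) (w : Fin n → ℝ) (k : ℕ) (σ : OSimp n) : ℝ :=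
  1 - (∑ τ ∈ simplices n X k, |fullLap n X w k τ σ.1|) / Kfull n X w k

/-- The up-walk transition matrix `P^{up}` on `S_k`. -/
def Pup (n : ℕ) (X : Finset (Finset (Fin n))) (w : Fin n → ℝ) (k : ℕ) :
    SState n → SState n → ℝ
  | some σ, some σ' =>
      if σ.1 ∈ X ∧ σ.1.card = k + 1 ∧ σ'.1 ∈ X ∧ σ'.1.card = k + 1 then
        if σ = σ' then (∑ u ∈ upSet n X σ.1, w u ^ 2) / Kup n X w k
        else if UpAdj n X σ σ' then
          ((∑ v ∈ σ.1 \ σ'.1, w v) * (∑ v ∈ σ'.1 \ σ.1, w v)) / Kup n X w k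
        else 0
      else 0
  | some σ, none => if σ.1 ∈ X ∧ σ.1.card = k + 1 then etaUp n X w k σ else 0
  | none, none => 1
  | none, some _ => 0

/-- The down-walk transition matrix `P^{down}` on `S_k`. -/
def Pdown (n : ℕ) (X : Finset (Finset (Fin n))) (w : Fin n → ℝ) (k : ℕ) :
    SState n → SState n → ℝ
  | some σ, some σ' =>
      if σ.1 ∈ X ∧ σ.1.card = k + 1 ∧ σ'.1 ∈ X ∧ σ'.1.card = k + 1 then
        if σ = σ' then (∑ v ∈ σ.1, w v ^ 2) / Kdown n X w k
        else if DownAdj n σ σ' then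
          ((∑ v ∈ σ.1 \ σ'.1, w v) * (∑ v ∈ σ'.1 \ σ.1, w v)) / Kdown n X w k
        else 0
      else 0
  | some σ, none => if σ.1 ∈ X ∧ σ.1.card = k + 1 then etaDown n X w k σ else 0
  | none, none => 1
  | none, some _ => 0

/-- The harmonic-walk transition matrix `P` on `S_k`. -/
def Pharm (n : ℕ) (X : Finset (Finset (Fin n))) (w : Fin n → ℝ) (k : ℕ) :
    SState n → SState n → ℝ
  | some σ, some σ' =>
      if σ.1 ∈ X ∧ σ.1.card = k + 1 ∧ σ'.1 ∈ X ∧ σ'.1.card = k + 1 then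
        if σ = σ' then
          ((∑ u ∈ upSet n X σ.1, w u ^ 2) + ∑ v ∈ σ.1, w v ^ 2) / Kfull n X w k
        else if DownAdj n σ σ' ∧ ¬ UpAdj n X σ (σ'.1, !σ'.2) then
          ((∑ v ∈ σ.1 \ σ'.1, w v) * (∑ v ∈ σ'.1 \ σ.1, w v)) / Kfull n X w k
        else 0
      else 0
  | some σ, none => if σ.1 ∈ X ∧ σ.1.card = k + 1 then etaFull n X w k σ else 0
  | none, none => 1
  | none, some _ => 0

/-! ### Quantum encodings -/

/-- The computational basis of `(ℂ²)^{⊗(n+2)}`: `n` membership qubits, one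
orientation qubit, and one qubit flagging the absorbing state. -/
abbrev QIdx (n : ℕ) := (Fin n → Bool) × Bool × Bool

/-- The encoding of states of `S_k` as computational basis states:
`|σ⟩ = |x_σ⟩|s(σ)⟩|0⟩` and `|Θ⟩ = |0^n⟩|0⟩|1⟩`. -/
def encode (n : ℕ) : SState n → QIdx n
  | none => (fun _ => false, false, true)
  | some σ => (fun i => decide (i ∈ σ.1), σ.2, false)

/-- The all-zeros basis state `|0^{n+2}⟩`. -/
def zeroQ (n : ℕ) : QIdx n := (fun _ => false, false, false)

/-- The projector `Π_k^±` onto the span of the encoded oriented `k`-simplices of `X`. -/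
def PiPM (n : ℕ) (X : Finset (Finset (Fin n))) (k : ℕ) : Matrix (QIdx n) (QIdx n) ℂ :=
  Matrix.of fun p q =>
    if p = q ∧ ∃ σ : OSimp n, σ.1 ∈ X ∧ σ.1.card = k + 1 ∧ p = encode n (some σ) then 1 else 0

/-- The projector `Π_k` onto the span of the encoded positively oriented
`k`-simplices of `X`. -/
def PiK (n : ℕ) (X : Finset (Finset (Fin n))) (k : ℕ) : Matrix (QIdx n) (QIdx n) ℂ :=
  Matrix.of fun p q =>
    if p = q ∧ ∃ s ∈ X, s.card = k + 1 ∧ p = encode n (some (s, false)) then 1 else 0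

/-- Decode a basis state into the state of `S_k` it represents (if any). -/
def decodeQ (n : ℕ) : QIdx n → Option (SState n) := fun q =>
  if q.2.2 = false then some (some ((Finset.univ.filter fun i => q.1 i = true), q.2.1))
  else if q = encode n none then some none else none

/-- Identify a transition kernel `P` on `S_k` with the operator on `(ℂ²)^{⊗(n+2)}`
having `⟨σ'|P|σ⟩ = P_{σ,σ'}` for `σ, σ' ∈ S_k`, vanishing off the span of `S_k`. -/
def toQMat (n : ℕ) (P : SState n → SState n → ℝ) : Matrix (QIdx n) (QIdx n) ℂ :=
  Matrix.of fun q' q =>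
    match decodeQ n q, decodeQ n q' with
    | some σ, some σ' => (P σ σ' : ℂ)
    | _, _ => 0

/-- Identify a matrix indexed by vertex sets (acting on the chain space in the
orthonormal basis of positively oriented simplices) with an operator on
`(ℂ²)^{⊗(n+2)}` supported on the encoded positively oriented simplices. -/
def lapQ (n : ℕ) (L : Matrix (Finset (Fin n)) (Finset (Fin n)) ℝ) :
    Matrix (QIdx n) (QIdx n) ℂ :=
  Matrix.of fun q' q =>
    if q'.2.1 = false ∧ q'.2.2 = false ∧ q.2.1 = false ∧ q.2.2 = false then
      (L (Finset.univ.filter fun i => q'.1 i = true)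
         (Finset.univ.filter fun i => q.1 i = true) : ℂ)
    else 0

/-- The SWAP unitary exchanging the two `(n+2)`-qubit registers. -/
def swapMat (n : ℕ) : Matrix (QIdx n × QIdx n) (QIdx n × QIdx n) ℂ :=
  Matrix.of fun p q => if p.1 = q.2 ∧ p.2 = q.1 then 1 else 0

/-- The compression `(· ⊗ ⟨0^{n+2}|) W (· ⊗ |0^{n+2}⟩)` of an operator on two
`(n+2)`-qubit registers to the first register. -/
def compress (n : ℕ) (W : Matrix (QIdx n × QIdx n) (QIdx n × QIdx n) ℂ) :
    Matrix (QIdx n) (QIdx n) ℂ :=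
  Matrix.of fun q' q => W (q', zeroQ n) (q, zeroQ n)

/-- The compression `(· ⊗ ⟨0^α|) W (· ⊗ |0^α⟩)` of an operator on the system
register together with an `α`-qubit ancilla register. -/
def compressA (n α : ℕ) (W : Matrix (QIdx n × (Fin α → Bool)) (QIdx n × (Fin α → Bool)) ℂ) :
    Matrix (QIdx n) (QIdx n) ℂ :=
  Matrix.of fun q' q => W (q', fun _ => false) (q, fun _ => false)

/-- The gate `I^{⊗n} ⊗ (HZ) ⊗ I` acting on the orientation qubit, where `H` is the
Hadamard gate and `Z` the Pauli-Z gate. -/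
def hzGate (n : ℕ) : Matrix (QIdx n) (QIdx n) ℂ :=
  Matrix.of fun p q =>
    if p.1 = q.1 ∧ p.2.2 = q.2.2 then
      (if p.2.1 = false ∧ q.2.1 = true then -((Real.sqrt 2 : ℂ))⁻¹ else ((Real.sqrt 2 : ℂ))⁻¹)
    else 0


def cnt {n : ℕ} (σ : Finset (Fin n)) (v : Fin n) : ℕ := (σ.filter fun u => u < v).card

theorem cnt_insert {n : ℕ} (σ : Finset (Fin n)) (a v : Fin n) (ha : a ∉ σ) :
    cnt (insert a σ) v = cnt σ v + if a < v then 1 else 0 := by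
  unfold cnt
  rw [Finset.filter_insert]
  split_ifs with h
  · rw [Finset.card_insert_of_notMem (by simp [ha])]
  · simp

theorem boundary_insert {n : ℕ} (X : Finset (Finset (Fin n))) (w : Fin n → ℝ) (k : ℕ)
    (τ : Finset (Fin n)) (v : Fin n) (hv : v ∉ τ) (hX : insert v τ ∈ X) (hc : τ.card = k) :
    boundary n X w k τ (insert v τ) = (-1) ^ (cnt τ v) * w v := by
  unfold boundary
  rw [Matrix.of_apply, if_pos ⟨hX, by rw [Finset.card_insert_of_notMem hv, hc],
    Finset.subset_insert _ _, hc⟩]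
  have : insert v τ \ τ = {v} := by
    ext x; simp only [Finset.mem_sdiff, Finset.mem_insert, Finset.mem_singleton]
    constructor
    · rintro ⟨h | h, h'⟩
      · exact h
      · exact absurd h h'
    · rintro rfl; exact ⟨Or.inl rfl, hv⟩
  rw [this, Finset.sum_singleton]
  have h := cnt_insert τ v v hv
  rw [if_neg (lt_irrefl _)] at h
  unfold cnt at h ⊢
  rw [h]; simp

theorem boundary_ne {n : ℕ} (X : Finset (Finset (Fin n))) (w : Fin n → ℝ) (k : ℕ)
    (τ σ : Finset (Fin n)) (h : boundary n X w k τ σ ≠ 0) :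
    σ ∈ X ∧ σ.card = k + 1 ∧ τ ⊆ σ ∧ τ.card = k := by
  by_contra h'
  apply h
  unfold boundary
  rw [Matrix.of_apply, if_neg h']

theorem boundary_ne' {n : ℕ} (X : Finset (Finset (Fin n))) (w : Fin n → ℝ) (k : ℕ)
    (τ σ : Finset (Fin n)) (h : boundary n X w k τ σ ≠ 0) :
    ∃ v, v ∉ τ ∧ insert v τ = σ := by
  obtain ⟨_, h1, h2, h3⟩ := boundary_ne X w k τ σ h
  have := (Finset.exists_eq_insert_iff (s := τ) (t := σ)).2 ⟨h2, by omega⟩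
  obtain ⟨a, ha, hb⟩ := this
  refine ⟨a, ha, ?_⟩
  rw [← hb]; 

theorem sgn_sq (m : ℕ) (x : ℝ) : ((-1) ^ m * x) * ((-1) ^ m * x) = x ^ 2 := by
  rcases neg_one_pow_eq_or ℝ m with h | h <;> rw [h] <;> ring

theorem upLap_diag {n : ℕ} (X : Finset (Finset (Fin n))) (w : Fin n → ℝ) (k : ℕ)
    (σ : Finset (Fin n)) (hc : σ.card = k + 1) :
    upLap n X w k σ σ = ∑ u ∈ upSet n X σ, w u ^ 2 := by
  unfold upLap
  rw [Matrix.mul_apply]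
  simp only [Matrix.transpose_apply]
  symm
  apply Finset.sum_of_injOn (fun u => insert u σ)
  · intro a ha b hb h
    simp only [upSet, Finset.coe_filter, Finset.mem_univ, true_and, Set.mem_ofPred_eq] at ha hb
    have h : insert a σ = insert b σ := h
    have : a ∈ insert b σ := by rw [← h]; exact Finset.mem_insert_self _ _
    rcases Finset.mem_insert.1 this with h | h
    · exact h
    · exact absurd h ha.1
  · intro a _; simp
  · intro τ _ hτ
    by_contra h
    have h0 := left_ne_zero_of_mul h
    obtain ⟨v, hv, rfl⟩ := boundary_ne' X w _ _ _ h0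
    apply hτ
    refine ⟨v, ?_, rfl⟩
    simp only [upSet, Finset.coe_filter, Finset.mem_univ, true_and, Set.mem_ofPred_eq]
    exact ⟨hv, (boundary_ne X w _ _ _ h0).1⟩
  · intro u hu
    simp only [upSet, Finset.mem_filter, Finset.mem_univ, true_and] at hu
    rw [boundary_insert X w (k+1) σ u hu.1 hu.2 hc, sgn_sq]

theorem downLap_diag {n : ℕ} (X : Finset (Finset (Fin n))) (w : Fin n → ℝ) (k : ℕ)
    (σ : Finset (Fin n)) (hX : σ ∈ X) (hc : σ.card = k + 1) :
    downLap n X w k σ σ = ∑ v ∈ σ, w v ^ 2 := by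
  unfold downLap
  rw [Matrix.mul_apply]
  simp only [Matrix.transpose_apply]
  symm
  apply Finset.sum_of_injOn (fun u => σ.erase u)
  · intro a ha b hb h
    by_contra hab
    have : a ∈ σ.erase b := Finset.mem_erase.2 ⟨hab, ha⟩
    have h : σ.erase a = σ.erase b := h
    rw [← h] at this
    exact Finset.notMem_erase _ _ this
  · intro a _; simp
  · intro τ _ hτ
    by_contra h
    have h0 := left_ne_zero_of_mul h
    obtain ⟨v, hv, rfl⟩ := boundary_ne' X w _ _ _ h0
    apply hτ
    exact ⟨v, Finset.mem_insert_self _ _, Finset.erase_insert hv⟩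
  · intro u hu
    have h := boundary_insert X w k (σ.erase u) u (Finset.notMem_erase _ _)
      (by rw [Finset.insert_erase hu]; exact hX)
      (by rw [Finset.card_erase_of_mem hu, hc]; rfl)
    rw [Finset.insert_erase hu] at h
    rw [h, sgn_sq]

theorem up_off_ne {n : ℕ} (X : Finset (Finset (Fin n))) (w : Fin n → ℝ) (k : ℕ)
    (σ σ' τ : Finset (Fin n)) (hne : σ ≠ σ') (hc : σ.card = σ'.card)
    (h : boundary n X w (k+1) σ τ * boundary n X w (k+1) σ' τ ≠ 0) :
    τ ∈ X ∧ τ = σ ∪ σ' ∧ (σ ∩ σ').card = k := by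
  obtain ⟨h1, h2, h3, h4⟩ := boundary_ne X w _ _ _ (left_ne_zero_of_mul h)
  obtain ⟨-, -, h7, h8⟩ := boundary_ne X w _ _ _ (right_ne_zero_of_mul h)
  have hs : σ ∪ σ' ⊆ τ := Finset.union_subset h3 h7
  have hlt : σ.card < (σ ∪ σ').card := by
    apply Finset.card_lt_card
    refine ⟨Finset.subset_union_left, fun hh => hne ?_⟩
    symm
    exact Finset.eq_of_subset_of_card_le (Finset.subset_union_right.trans hh) hc.le
  have hle := Finset.card_le_card hs
  refine ⟨h1, (Finset.eq_of_subset_of_card_le hs (by omega)).symm, ?_⟩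
  have := Finset.card_union_add_card_inter σ σ'
  omega

theorem down_off_ne {n : ℕ} (X : Finset (Finset (Fin n))) (w : Fin n → ℝ) (k : ℕ)
    (σ σ' τ : Finset (Fin n)) (hne : σ ≠ σ') (hc : σ.card = σ'.card)
    (h : boundary n X w k τ σ * boundary n X w k τ σ' ≠ 0) :
    τ = σ ∩ σ' ∧ (σ ∩ σ').card = k := by
  obtain ⟨h1, h2, h3, h4⟩ := boundary_ne X w _ _ _ (left_ne_zero_of_mul h)
  obtain ⟨-, -, h7, h8⟩ := boundary_ne X w _ _ _ (right_ne_zero_of_mul h)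
  have hs : τ ⊆ σ ∩ σ' := Finset.subset_inter h3 h7
  have hlt : (σ ∩ σ').card < σ.card := by
    apply Finset.card_lt_card
    refine ⟨Finset.inter_subset_left, fun hh => hne ?_⟩
    exact Finset.eq_of_subset_of_card_le (hh.trans Finset.inter_subset_right) hc.ge
  have hle := Finset.card_le_card hs
  have e := Finset.eq_of_subset_of_card_le hs (by omega)
  exact ⟨e, by rw [← e]; exact h4⟩

theorem upLap_off {n : ℕ} (X : Finset (Finset (Fin n))) (w : Fin n → ℝ) (k : ℕ)
    (σ σ' : Finset (Fin n)) (hne : σ ≠ σ') (hc : σ.card = σ'.card) :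
    upLap n X w k σ σ' =
      boundary n X w (k+1) σ (σ ∪ σ') * boundary n X w (k+1) σ' (σ ∪ σ') := by
  unfold upLap
  rw [Matrix.mul_apply]
  simp only [Matrix.transpose_apply]
  apply Finset.sum_eq_single
  · intro τ _ hτ
    by_contra h
    exact hτ (up_off_ne X w k σ σ' τ hne hc h).2.1
  · intro h; exact absurd (Finset.mem_univ _) h

theorem downLap_off {n : ℕ} (X : Finset (Finset (Fin n))) (w : Fin n → ℝ) (k : ℕ)
    (σ σ' : Finset (Fin n)) (hne : σ ≠ σ') (hc : σ.card = σ'.card) :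
    downLap n X w k σ σ' =
      boundary n X w k (σ ∩ σ') σ * boundary n X w k (σ ∩ σ') σ' := by
  unfold downLap
  rw [Matrix.mul_apply]
  simp only [Matrix.transpose_apply]
  apply Finset.sum_eq_single
  · intro τ _ hτ
    by_contra h
    exact hτ (down_off_ne X w k σ σ' τ hne hc h).1
  · intro h; exact absurd (Finset.mem_univ _) h

section core
variable {n : ℕ} {ρ : Finset (Fin n)} {a b : Fin n}

theorem ins_inter (ha : a ∉ ρ) (hb : b ∉ ρ) (hab : a ≠ b) : insert a ρ ∩ insert b ρ = ρ := by
  ext x; simp only [Finset.mem_inter, Finset.mem_insert]; grind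
theorem ins_union : insert a ρ ∪ insert b ρ = insert a (insert b ρ) := by
  ext x; simp only [Finset.mem_union, Finset.mem_insert]; grind
theorem ins_sdiff (ha : a ∉ ρ) (hab : a ≠ b) : insert a ρ \ insert b ρ = {a} := by
  ext x; simp only [Finset.mem_sdiff, Finset.mem_insert, Finset.mem_singleton]; grind
theorem ins_ne (ha : a ∉ ρ) (hab : a ≠ b) : insert a ρ ≠ insert b ρ := by
  intro h
  have := ins_sdiff ha hab
  rw [h, Finset.sdiff_self] at this
  exact Finset.singleton_ne_empty a this.symm

theorem core_val (X : Finset (Finset (Fin n))) (w : Fin n → ℝ) (k : ℕ)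
    (ha : a ∉ ρ) (hb : b ∉ ρ) (hab : a ≠ b) (hc : ρ.card = k)
    (hA : insert a ρ ∈ X) (hB : insert b ρ ∈ X) :
    fullLap n X w k (insert a ρ) (insert b ρ) =
      if insert a (insert b ρ) ∈ X then 0 else (-1) ^ (cnt ρ a + cnt ρ b) * (w a * w b) := by
  have hca := Finset.card_insert_of_notMem ha
  have hcb := Finset.card_insert_of_notMem hb
  have hne := ins_ne ha hab
  unfold fullLap
  rw [Matrix.add_apply, upLap_off X w k _ _ hne (by omega), downLap_off X w k _ _ hne (by omega),
    ins_inter ha hb hab, ins_union, boundary_insert X w k ρ a ha hA hc,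
    boundary_insert X w k ρ b hb hB hc]
  split_ifs with h
  · have h' := h
    rw [Finset.insert_comm] at h'
    have ha' : a ∉ insert b ρ := by simp [ha, hab]
    have hb' : b ∉ insert a ρ := by simp [hb, hab.symm]
    rw [boundary_insert X w (k+1) _ a ha' h (by omega), Finset.insert_comm,
      boundary_insert X w (k+1) _ b hb' h' (by omega), cnt_insert _ _ _ ha, cnt_insert _ _ _ hb]
    rcases lt_or_gt_of_ne hab with hl | hl
    · rw [if_pos hl, if_neg hl.le.not_gt]; ring
    · rw [if_pos hl, if_neg hl.le.not_gt]; ring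
  · have : boundary n X w (k+1) (insert a ρ) (insert a (insert b ρ)) = 0 := by
      by_contra hh
      exact h (boundary_ne _ _ _ _ _ hh).1
    rw [this]; ring

theorem core_down (ha : a ∉ ρ) (hb : b ∉ ρ) (hab : a ≠ b) (s s' : Bool) :
    DownAdj n (insert a ρ, s) (insert b ρ, s') ↔
      xor s (decide (cnt ρ a % 2 = 1)) = xor s' (decide (cnt ρ b % 2 = 1)) := by
  have hca := Finset.card_insert_of_notMem ha
  have hcb := Finset.card_insert_of_notMem hb
  have h1 := cnt_insert ρ a a ha
  have h2 := cnt_insert ρ b b hb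
  rw [if_neg (lt_irrefl _), add_zero] at h1 h2
  unfold DownAdj faceFlip
  simp only [ins_inter ha hb hab, ins_sdiff ha hab, ins_sdiff hb hab.symm,
    Finset.mem_singleton, forall_eq]
  change _ ∧ _ ∧ _ ∧ xor s (decide (cnt (insert a ρ) a % 2 = 1)) =
    xor s' (decide (cnt (insert b ρ) b % 2 = 1)) ↔ _
  rw [h1, h2]
  exact ⟨fun h => h.2.2.2, fun h => ⟨ins_ne ha hab, by omega, by omega, h⟩⟩

theorem core_up (X : Finset (Finset (Fin n))) (ha : a ∉ ρ) (hb : b ∉ ρ) (hab : a ≠ b)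
    (s s' : Bool) :
    UpAdj n X (insert a ρ, s) (insert b ρ, s') ↔ insert a (insert b ρ) ∈ X ∧
      xor s (decide (cnt ρ a % 2 = 1)) = xor (!s') (decide (cnt ρ b % 2 = 1)) := by
  have hca := Finset.card_insert_of_notMem ha
  have hcb := Finset.card_insert_of_notMem hb
  have ha' : a ∉ insert b ρ := by simp [ha, hab]
  have hb' : b ∉ insert a ρ := by simp [hb, hab.symm]
  have hcab := Finset.card_insert_of_notMem ha'
  have h1 : cnt (insert a (insert b ρ)) a = cnt ρ a + if b < a then 1 else 0 := by
    rw [cnt_insert _ _ _ ha', cnt_insert _ _ _ hb]; simp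
  have h2 : cnt (insert a (insert b ρ)) b = cnt ρ b + if a < b then 1 else 0 := by
    rw [Finset.insert_comm, cnt_insert _ _ _ hb', cnt_insert _ _ _ ha]; simp
  unfold UpAdj faceFlip
  simp only [ins_union, ins_sdiff ha hab, ins_sdiff hb hab.symm,
    Finset.mem_singleton, forall_eq]
  change _ ∧ _ ∧ _ ∧ _ ∧ xor s (decide (cnt (insert a (insert b ρ)) b % 2 = 1)) =
    xor s' (decide (cnt (insert a (insert b ρ)) a % 2 = 1)) ↔ _
  rw [h1, h2]
  have key : (xor s (decide ((cnt ρ b + if a < b then 1 else 0) % 2 = 1)) =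
    xor s' (decide ((cnt ρ a + if b < a then 1 else 0) % 2 = 1))) ↔
      xor s (decide (cnt ρ a % 2 = 1)) = xor (!s') (decide (cnt ρ b % 2 = 1)) := by
    rcases lt_or_gt_of_ne hab with hl | hl <;> rw [if_pos hl, if_neg hl.le.not_gt] <;>
    rcases Nat.mod_two_eq_zero_or_one (cnt ρ a) with h | h <;>
    rcases Nat.mod_two_eq_zero_or_one (cnt ρ b) with h' | h' <;>
    simp [Nat.add_mod, h, h']
  rw [key]
  exact ⟨fun h => ⟨h.2.1, h.2.2.2.2⟩, fun h => ⟨ins_ne ha hab, h.1, by omega, by omega, h.2⟩⟩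

end core

theorem exists_core {n k : ℕ} {σ σ' : Finset (Fin n)} (hc : σ.card = k + 1)
    (hc' : σ'.card = k + 1) (h : (σ ∩ σ').card = k) :
    ∃ (ρ : Finset (Fin n)) (a b : Fin n), a ∉ ρ ∧ b ∉ ρ ∧ a ≠ b ∧ ρ.card = k ∧
      σ = insert a ρ ∧ σ' = insert b ρ := by
  obtain ⟨a, ha, hb⟩ := (Finset.exists_eq_insert_iff (s := σ ∩ σ') (t := σ)).2
    ⟨Finset.inter_subset_left, by omega⟩
  obtain ⟨b, ha', hb'⟩ := (Finset.exists_eq_insert_iff (s := σ ∩ σ') (t := σ')).2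
    ⟨Finset.inter_subset_right, by omega⟩
  refine ⟨σ ∩ σ', a, b, ha, ha', ?_, h, ?_, ?_⟩
  · rintro rfl
    apply ha
    rw [Finset.mem_inter]
    exact ⟨by rw [← hb]; exact Finset.mem_insert_self _ _,
      by rw [← hb']; exact Finset.mem_insert_self _ _⟩
  · exact hb.symm
  · exact hb'.symm

/-- Matrix elements of the full weighted combinatorial Laplacian in the
orthonormal chain basis indexed by positively oriented `k`-simplices. -/
theorem fullLap_matrix_elements (n k : ℕ) (X : Finset (Finset (Fin n))) (hX : IsComplex n X)
    (w : Fin n → ℝ) (hw : ∀ v, 0 < w v)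
    (σ σ' : Finset (Fin n)) (hσ : σ ∈ X) (hσc : σ.card = k + 1)
    (hσ' : σ' ∈ X) (hσ'c : σ'.card = k + 1) :
    (σ = σ' →
      fullLap n X w k σ σ' = (∑ u ∈ upSet n X σ, w u ^ 2) + ∑ v ∈ σ, w v ^ 2) ∧
    (DownAdj n (σ, false) (σ', false) → ¬ UpAdj n X (σ, false) (σ', true) →
      ∀ v ∈ σ \ σ', ∀ v' ∈ σ' \ σ, fullLap n X w k σ σ' = w v * w v') ∧
    (DownAdj n (σ, false) (σ', true) → ¬ UpAdj n X (σ, false) (σ', false) →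
      ∀ v ∈ σ \ σ', ∀ v' ∈ σ' \ σ, fullLap n X w k σ σ' = -(w v * w v')) ∧
    (σ ≠ σ' →
      ¬ (DownAdj n (σ, false) (σ', false) ∧ ¬ UpAdj n X (σ, false) (σ', true)) →
      ¬ (DownAdj n (σ, false) (σ', true) ∧ ¬ UpAdj n X (σ, false) (σ', false)) →
      fullLap n X w k σ σ' = 0) := by
  refine ⟨?_, ?_⟩
  · rintro rfl
    unfold fullLap
    rw [Matrix.add_apply, upLap_diag X w k σ hσc, downLap_diag X w k σ hσ hσc]
  by_cases hk : (σ ∩ σ').card = k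
  · obtain ⟨ρ, a, b, ha, hb, hab, hc, rfl, rfl⟩ := exists_core hσc hσ'c hk
    rw [core_val X w k ha hb hab hc hσ hσ']
    simp only [core_down ha hb hab, core_up X ha hb hab, ins_sdiff ha hab, ins_sdiff hb hab.symm,
      Finset.mem_singleton, forall_eq]
    have hp : (-1 : ℝ) ^ (cnt ρ a + cnt ρ b) =
        if (cnt ρ a % 2 = 1) ↔ (cnt ρ b % 2 = 1) then 1 else -1 := by
      split_ifs with h
      · exact Even.neg_one_pow (Nat.even_iff.2 (by omega))
      · exact Odd.neg_one_pow (Nat.odd_iff.2 (by omega))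
    rw [hp]
    by_cases hx : insert a (insert b ρ) ∈ X <;> by_cases h1 : cnt ρ a % 2 = 1 <;>
      by_cases h2 : cnt ρ b % 2 = 1 <;> simp [hx, h1, h2]
  · refine ⟨fun h => absurd h.2.1 ?_, fun h => absurd h.2.1 ?_, fun hne _ _ => ?_⟩
    · simp only; omega
    · simp only; omega
    · unfold fullLap
      rw [Matrix.add_apply, upLap_off X w k _ _ hne (by omega),
        downLap_off X w k _ _ hne (by omega)]
      have e1 : boundary n X w (k+1) σ (σ ∪ σ') * boundary n X w (k+1) σ' (σ ∪ σ') = 0 := by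
        by_contra h
        exact hk (up_off_ne X w k σ σ' _ hne (by omega) h).2.2
      have e2 : boundary n X w k (σ ∩ σ') σ * boundary n X w k (σ ∩ σ') σ' = 0 := by
        by_contra h
        exact hk (down_off_ne X w k σ σ' _ hne (by omega) h).2
      rw [e1, e2, add_zero]
end QWSC
end
end

section
/- If σ and σ' are oriented k-simplices with distinct vertex sets and σ ∼↑ σ' (they are up-adjacent and oriented similarly), then σ ∼↓ σ̄' (σ and the oppositely oriented version of σ' are down-adjacent with the same induced orientation on their common lower face). -/
open BigOperators Matrix Kronecker

attribute [local instance] Classical.propDecidable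

noncomputable section

namespace QWSC

theorem faceFlip_insert_aux (n : ℕ) (U s : Finset (Fin n)) (a b : Fin n) (ha : a ∉ s)
    (hU : ∀ x, x ∈ U ↔ x = a ∨ x ∈ s) :
    faceFlip n U b = xor (faceFlip n s b) (decide (a < b)) := by
  have hU' : U = insert a s := by
    ext x
    rw [hU x, Finset.mem_insert]
  subst hU'
  unfold faceFlip
  rw [Finset.filter_insert]
  by_cases hab : a < b
  · rw [if_pos hab, Finset.card_insert_of_notMem (by simp [ha])]
    rcases Nat.mod_two_eq_zero_or_one (s.filter fun u => u < b).card with h | h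
    · have h2 : ((s.filter fun u => u < b).card + 1) % 2 = 1 := by omega
      simp [h, h2, hab]
    · have h2 : ((s.filter fun u => u < b).card + 1) % 2 = 0 := by omega
      simp [h, h2, hab]
  · rw [if_neg hab]
    simp [hab]

/-- If oriented `k`-simplices `σ, σ'` (with distinct vertex sets) satisfy
`σ ∼↑ σ'`, then `σ ∼↓ σ̄'`. -/
theorem upAdj_downAdj_opposite (n k : ℕ) (X : Finset (Finset (Fin n))) (hX : IsComplex n X)
    (σ σ' : OSimp n)
    (hσ : σ.1 ∈ X) (hσc : σ.1.card = k + 1) (hσ' : σ'.1 ∈ X) (hσ'c : σ'.1.card = k + 1)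
    (h : UpAdj n X σ σ') :
    DownAdj n σ (σ'.1, !σ'.2) := by
  obtain ⟨h1, h2, h3, h4, h5⟩ := h
  have hcu := Finset.card_union_add_card_inter σ.1 σ'.1
  refine ⟨h1, ?_, h4, ?_⟩
  · show (σ.1 ∩ σ'.1).card + 1 = σ.1.card
    omega
  intro v hv v' hv'
  change v ∈ σ.1 \ σ'.1 at hv
  change v' ∈ σ'.1 \ σ.1 at hv'
  show xor σ.2 (faceFlip n σ.1 v) = xor (!σ'.2) (faceFlip n σ'.1 v')
  have key := h5 v' hv' v hv
  have e1 : (σ.1 \ σ'.1).card = 1 := by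
    have := Finset.card_sdiff_add_card_inter σ.1 σ'.1
    omega
  have e2 : (σ'.1 \ σ.1).card = 1 := by
    have := Finset.card_sdiff_add_card_inter σ'.1 σ.1
    rw [Finset.inter_comm] at this
    omega
  have f1 : ∀ x ∈ σ.1 \ σ'.1, x = v := fun x hx => Finset.card_le_one.mp e1.le x hx v hv
  have f2 : ∀ x ∈ σ'.1 \ σ.1, x = v' := fun x hx => Finset.card_le_one.mp e2.le x hx v' hv'
  simp only [Finset.mem_sdiff] at hv hv' f1 f2
  have g1 := faceFlip_insert_aux n (σ.1 ∪ σ'.1) σ'.1 v v' hv.2 (by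
    intro x
    rw [Finset.mem_union]
    constructor
    · intro hx
      by_cases hx' : x ∈ σ'.1
      · exact Or.inr hx'
      · exact Or.inl (f1 x ⟨hx.resolve_right hx', hx'⟩)
    · rintro (rfl | hx)
      · exact Or.inl hv.1
      · exact Or.inr hx)
  have g2 := faceFlip_insert_aux n (σ.1 ∪ σ'.1) σ.1 v' v hv'.2 (by
    intro x
    rw [Finset.mem_union]
    constructor
    · intro hx
      by_cases hx' : x ∈ σ.1
      · exact Or.inr hx'
      · exact Or.inl (f2 x ⟨hx.resolve_left hx', hx'⟩)
    · rintro (rfl | hx)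
      · exact Or.inr hv'.1
      · exact Or.inl hx)
  rw [g1, g2] at key
  have hne : v ≠ v' := fun e => hv.2 (e ▸ hv'.1)
  have hlt : decide (v' < v) = !decide (v < v') := by
    rcases lt_or_gt_of_ne hne with h | h
    · simp [h, h.le]
    · simp [h, h.le]
  rw [hlt] at key
  revert key
  generalize σ.2 = a, σ'.2 = b, faceFlip n σ.1 v = c, faceFlip n σ'.1 v' = d, decide (v < v') = e
  revert a b c d e
  decide
end QWSC
end
end

section
/- For every σ ∈ X_k^+, the absolute row sums of the Laplacian matrices are bounded by the normalization constants: Σ_{τ∈X_k^+} |(Δ_k^{up})_{τ,σ}| ≤ K^{up}, Σ_{τ∈X_k^+} |(Δ_k^{down})_{τ,σ}| ≤ K^{down}, and Σ_{τ∈X_k^+} |(Δ_k)_{τ,σ}| ≤ K. Consequently the operator norms satisfy ‖Δ_k^{up}‖ ≤ K^{up}, ‖Δ_k^{down}‖ ≤ K^{down}, and ‖Δ_k‖ ≤ K. -/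
open BigOperators Matrix Kronecker

attribute [local instance] Classical.propDecidable

noncomputable section

namespace QWSC

lemma bd_insert (n : ℕ) (X : Finset (Finset (Fin n))) (w : Fin n → ℝ) (m : ℕ)
    (s : Finset (Fin n)) (a : Fin n) (ha : a ∉ s) :
    boundary n X w m s (insert a s) = if insert a s ∈ X ∧ s.card = m then
      (-1 : ℝ) ^ ((s.filter fun u => u < a).card) * w a else 0 := by
  have h1 : insert a s \ s = {a} := by
    ext x; simp only [Finset.mem_sdiff, Finset.mem_insert, Finset.mem_singleton]
    constructor
    · rintro ⟨h | h, h2⟩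
      · exact h
      · exact absurd h h2
    · rintro rfl; exact ⟨Or.inl rfl, ha⟩
  simp only [boundary, Matrix.of_apply, h1, Finset.sum_singleton, Finset.card_insert_of_notMem ha,
    Finset.filter_insert, lt_irrefl, if_false]
  by_cases hc : s.card = m <;> by_cases hx : insert a s ∈ X <;> simp [hc, hx]

lemma bd_ne (n : ℕ) (X : Finset (Finset (Fin n))) (w : Fin n → ℝ) (m : ℕ)
    (s t : Finset (Fin n)) (h : boundary n X w m s t ≠ 0) :
    t ∈ X ∧ t.card = m + 1 ∧ s ⊆ t ∧ s.card = m ∧ ∃ a, a ∉ s ∧ t = insert a s := by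
  simp only [boundary, Matrix.of_apply, ne_eq, ite_eq_right_iff, Classical.not_imp] at h
  obtain ⟨⟨h1, h2, h3, h4⟩, -⟩ := h
  refine ⟨h1, h2, h3, h4, ?_⟩
  have h5 := Finset.card_sdiff_add_card_eq_card h3
  have h6 : (t \ s).card = 1 := by omega
  obtain ⟨a, ha⟩ := Finset.card_eq_one.1 h6
  have hm : a ∈ t \ s := by rw [ha]; simp
  refine ⟨a, (Finset.mem_sdiff.1 hm).2, ?_⟩
  rw [← Finset.sdiff_union_of_subset h3, ha]; rfl

lemma bd_abs (n : ℕ) (X : Finset (Finset (Fin n))) (w : Fin n → ℝ) (hw : ∀ v, 0 < w v) (m : ℕ)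
    (s : Finset (Fin n)) (a : Fin n) (ha : a ∉ s) :
    |boundary n X w m s (insert a s)| ≤ w a := by
  rw [bd_insert n X w m s a ha]
  split_ifs
  · rw [abs_mul, abs_pow, abs_neg, abs_one, one_pow, one_mul, abs_of_pos (hw a)]
  · simpa using (hw a).le

lemma row_le (n : ℕ) (X : Finset (Finset (Fin n))) (w : Fin n → ℝ) (hw : ∀ v, 0 < w v) (m : ℕ)
    (s : Finset (Fin n)) (f : Finset (Fin n) → ℝ) (hf : ∀ t, 0 ≤ f t) :
    ∑ t, |boundary n X w m s t| * f t ≤ ∑ u ∈ sᶜ, w u * f (insert u s) := by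
  have key : ∀ t, |boundary n X w m s t| * f t ≤
      ∑ u ∈ sᶜ, if t = insert u s then w u * f (insert u s) else 0 := by
    intro t
    have hnn : ∀ u ∈ sᶜ, (0:ℝ) ≤ if t = insert u s then w u * f (insert u s) else 0 := by
      intro u _
      split_ifs
      · exact mul_nonneg (hw u).le (hf _)
      · exact le_rfl
    by_cases h : boundary n X w m s t = 0
    · rw [h]; simpa using Finset.sum_nonneg hnn
    · obtain ⟨-, -, -, -, a, ha, rfl⟩ := bd_ne n X w m s t h
      refine le_trans ?_ (Finset.single_le_sum hnn (Finset.mem_compl.2 ha))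
      rw [if_pos rfl]
      exact mul_le_mul_of_nonneg_right (bd_abs n X w hw m s a ha) (hf _)
  refine (Finset.sum_le_sum fun t _ => key t).trans ?_
  rw [Finset.sum_comm]
  simp

lemma col_le (n : ℕ) (X : Finset (Finset (Fin n))) (w : Fin n → ℝ) (hw : ∀ v, 0 < w v) (m : ℕ)
    (t : Finset (Fin n)) (f : Finset (Fin n) → ℝ) (hf : ∀ t, 0 ≤ f t) :
    ∑ s, |boundary n X w m s t| * f s ≤ ∑ u ∈ t, w u * f (t.erase u) := by
  have key : ∀ s, |boundary n X w m s t| * f s ≤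
      ∑ u ∈ t, if s = t.erase u then w u * f (t.erase u) else 0 := by
    intro s
    have hnn : ∀ u ∈ t, (0:ℝ) ≤ if s = t.erase u then w u * f (t.erase u) else 0 := by
      intro u _
      split_ifs
      · exact mul_nonneg (hw u).le (hf _)
      · exact le_rfl
    by_cases h : boundary n X w m s t = 0
    · rw [h]; simpa using Finset.sum_nonneg hnn
    · obtain ⟨-, -, -, -, a, ha, rfl⟩ := bd_ne n X w m s t h
      refine le_trans ?_ (Finset.single_le_sum hnn (Finset.mem_insert_self a s))
      rw [Finset.erase_insert ha, if_pos rfl]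
      exact mul_le_mul_of_nonneg_right (bd_abs n X w hw m s a ha) (hf _)
  refine (Finset.sum_le_sum fun t _ => key t).trans ?_
  rw [Finset.sum_comm]
  simp

lemma up_row (n : ℕ) (X : Finset (Finset (Fin n))) (w : Fin n → ℝ) (hw : ∀ v, 0 < w v) (k : ℕ)
    (σ : Finset (Fin n)) :
    ∑ τ, |upLap n X w k τ σ| ≤ ∑ u ∈ σᶜ, ∑ v ∈ insert u σ, w u * w v := by
  calc ∑ τ, |upLap n X w k τ σ|
      ≤ ∑ τ, ∑ ρ, |boundary n X w (k+1) σ ρ| * |boundary n X w (k+1) τ ρ| := by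
        refine Finset.sum_le_sum fun τ _ => ?_
        rw [upLap, Matrix.mul_apply]
        refine (Finset.abs_sum_le_sum_abs _ _).trans (le_of_eq ?_)
        refine Finset.sum_congr rfl fun ρ _ => ?_
        rw [abs_mul, Matrix.transpose_apply, mul_comm]
    _ = ∑ ρ, |boundary n X w (k+1) σ ρ| * ∑ τ, |boundary n X w (k+1) τ ρ| := by
        rw [Finset.sum_comm]
        exact Finset.sum_congr rfl fun ρ _ => (Finset.mul_sum _ _ _).symm
    _ ≤ ∑ u ∈ σᶜ, w u * ∑ τ, |boundary n X w (k+1) τ (insert u σ)| :=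
        row_le n X w hw (k+1) σ (fun ρ => ∑ τ, |boundary n X w (k+1) τ ρ|)
          (fun ρ => Finset.sum_nonneg fun _ _ => abs_nonneg _)
    _ ≤ ∑ u ∈ σᶜ, w u * ∑ v ∈ insert u σ, w v := by
        refine Finset.sum_le_sum fun u _ => mul_le_mul_of_nonneg_left ?_ (hw u).le
        simpa using col_le n X w hw (k+1) (insert u σ) (fun _ => 1) (fun _ => zero_le_one)
    _ = _ := Finset.sum_congr rfl fun u _ => Finset.mul_sum _ _ _

lemma down_row (n : ℕ) (X : Finset (Finset (Fin n))) (w : Fin n → ℝ) (hw : ∀ v, 0 < w v) (k : ℕ)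
    (σ : Finset (Fin n)) :
    ∑ τ, |downLap n X w k τ σ| ≤ ∑ u ∈ σ, ∑ v ∈ (σ.erase u)ᶜ, w u * w v := by
  calc ∑ τ, |downLap n X w k τ σ|
      ≤ ∑ τ, ∑ ρ, |boundary n X w k ρ σ| * |boundary n X w k ρ τ| := by
        refine Finset.sum_le_sum fun τ _ => ?_
        rw [downLap, Matrix.mul_apply]
        refine (Finset.abs_sum_le_sum_abs _ _).trans (le_of_eq ?_)
        refine Finset.sum_congr rfl fun ρ _ => ?_
        rw [abs_mul, Matrix.transpose_apply, mul_comm]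
    _ = ∑ ρ, |boundary n X w k ρ σ| * ∑ τ, |boundary n X w k ρ τ| := by
        rw [Finset.sum_comm]
        exact Finset.sum_congr rfl fun ρ _ => (Finset.mul_sum _ _ _).symm
    _ ≤ ∑ u ∈ σ, w u * ∑ τ, |boundary n X w k (σ.erase u) τ| :=
        col_le n X w hw k σ (fun ρ => ∑ τ, |boundary n X w k ρ τ|)
          (fun ρ => Finset.sum_nonneg fun _ _ => abs_nonneg _)
    _ ≤ ∑ u ∈ σ, w u * ∑ v ∈ (σ.erase u)ᶜ, w v := by
        refine Finset.sum_le_sum fun u _ => mul_le_mul_of_nonneg_left ?_ (hw u).le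
        simpa using row_le n X w hw k (σ.erase u) (fun _ => 1) (fun _ => zero_le_one)
    _ = _ := Finset.sum_congr rfl fun u _ => Finset.mul_sum _ _ _

lemma full_diag (n : ℕ) (X : Finset (Finset (Fin n))) (w : Fin n → ℝ) (hw : ∀ v, 0 < w v) (k : ℕ)
    (σ : Finset (Fin n)) : |fullLap n X w k σ σ| ≤ ∑ v, w v ^ 2 := by
  have h1 : upLap n X w k σ σ ≤ ∑ u ∈ σᶜ, w u ^ 2 := by
    have := row_le n X w hw (k+1) σ (fun ρ => |boundary n X w (k+1) σ ρ|) (fun _ => abs_nonneg _)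
    rw [upLap, Matrix.mul_apply]
    simp only [abs_mul_abs_self] at this
    refine this.trans (Finset.sum_le_sum fun u hu => ?_)
    rw [sq]
    exact mul_le_mul_of_nonneg_left (bd_abs n X w hw _ _ _ (Finset.mem_compl.1 hu)) (hw u).le
  have h2 : downLap n X w k σ σ ≤ ∑ u ∈ σ, w u ^ 2 := by
    have := col_le n X w hw k σ (fun ρ => |boundary n X w k ρ σ|) (fun _ => abs_nonneg _)
    rw [downLap, Matrix.mul_apply]
    simp only [abs_mul_abs_self] at this
    refine this.trans (Finset.sum_le_sum fun u hu => ?_)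
    rw [sq]
    refine mul_le_mul_of_nonneg_left ?_ (hw u).le
    have := bd_abs n X w hw k (σ.erase u) u (Finset.notMem_erase u σ)
    rwa [Finset.insert_erase hu] at this
  have h3 : 0 ≤ upLap n X w k σ σ := by
    rw [upLap, Matrix.mul_apply]
    exact Finset.sum_nonneg fun _ _ => mul_self_nonneg _
  have h4 : 0 ≤ downLap n X w k σ σ := by
    rw [downLap, Matrix.mul_apply]
    exact Finset.sum_nonneg fun _ _ => mul_self_nonneg _
  have h5 := Finset.sum_add_sum_compl σ (fun v => w v ^ 2)
  rw [fullLap, Matrix.add_apply, abs_of_nonneg (add_nonneg h3 h4)]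
  linarith

lemma up_off (n : ℕ) (X : Finset (Finset (Fin n))) (w : Fin n → ℝ) (k : ℕ)
    (σ τ : Finset (Fin n)) (hne : τ ≠ σ) :
    upLap n X w k τ σ = boundary n X w (k+1) τ (τ ∪ σ) * boundary n X w (k+1) σ (τ ∪ σ) := by
  rw [upLap, Matrix.mul_apply]
  refine Finset.sum_eq_single _ (fun ρ _ hρ => ?_) (fun h => absurd (Finset.mem_univ _) h)
  by_contra h
  obtain ⟨h1, h2⟩ := mul_ne_zero_iff.1 h
  obtain ⟨-, a1, a2, a3, -⟩ := bd_ne n X w _ _ _ h1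
  obtain ⟨-, b1, b2, b3, -⟩ := bd_ne n X w _ _ _ h2
  apply hρ
  symm
  refine Finset.eq_of_subset_of_card_le (Finset.union_subset a2 b2) ?_
  rw [a1]
  have : τ ⊂ τ ∪ σ := by
    refine Finset.ssubset_iff_subset_ne.2 ⟨Finset.subset_union_left, fun h => hne ?_⟩
    have : σ ⊆ τ := by rw [h]; exact Finset.subset_union_right
    exact (Finset.eq_of_subset_of_card_le this (by omega)).symm
  have := Finset.card_lt_card this
  omega

lemma down_off (n : ℕ) (X : Finset (Finset (Fin n))) (w : Fin n → ℝ) (k : ℕ)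
    (σ τ : Finset (Fin n)) (hne : τ ≠ σ) :
    downLap n X w k τ σ = boundary n X w k (τ ∩ σ) τ * boundary n X w k (τ ∩ σ) σ := by
  rw [downLap, Matrix.mul_apply]
  refine Finset.sum_eq_single _ (fun ρ _ hρ => ?_) (fun h => absurd (Finset.mem_univ _) h)
  by_contra h
  obtain ⟨h1, h2⟩ := mul_ne_zero_iff.1 h
  obtain ⟨-, a1, a2, a3, -⟩ := bd_ne n X w _ _ _ h1
  obtain ⟨-, b1, b2, b3, -⟩ := bd_ne n X w _ _ _ h2
  apply hρ
  refine Finset.eq_of_subset_of_card_le (Finset.subset_inter a2 b2) ?_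
  rw [a3]
  have : τ ∩ σ ⊂ τ := by
    refine Finset.ssubset_iff_subset_ne.2 ⟨Finset.inter_subset_left, fun h => hne ?_⟩
    have : τ ⊆ σ := by rw [← h]; exact Finset.inter_subset_right
    exact Finset.eq_of_subset_of_card_le this (by omega)
  have := Finset.card_lt_card this
  omega

lemma full_adj (n : ℕ) (X : Finset (Finset (Fin n))) (hX : IsComplex n X)
    (w : Fin n → ℝ) (hw : ∀ v, 0 < w v) (k : ℕ)
    (s : Finset (Fin n)) (u v : Fin n) (hu : u ∉ s) (hv : v ∉ s) (huv : u ≠ v)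
    (hs : s.card = k) :
    |fullLap n X w k (insert u s) (insert v s)| ≤ w u * w v := by
  have hne : insert u s ≠ insert v s := by
    intro h
    have : u ∈ insert v s := by rw [← h]; exact Finset.mem_insert_self _ _
    rcases Finset.mem_insert.1 this with h | h
    · exact huv h
    · exact hu h
  have hvu : v ∉ insert u s := by simp [hv, huv.symm]
  have huv' : u ∉ insert v s := by simp [hu, huv]
  have hun : insert u s ∪ insert v s = insert v (insert u s) := by
    ext x; simp only [Finset.mem_union, Finset.mem_insert]; tauto
  have hin : insert u s ∩ insert v s = s := by
    ext x; simp only [Finset.mem_inter, Finset.mem_insert]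
    constructor
    · rintro ⟨rfl | h1, h2 | h2⟩
      · exact absurd h2 huv
      · exact h2
      · exact h1
      · exact h1
    · exact fun h => ⟨Or.inr h, Or.inr h⟩
  rw [fullLap, Matrix.add_apply, up_off n X w k _ _ hne, down_off n X w k _ _ hne, hun, hin]
  by_cases hρ : insert v (insert u s) ∈ X
  · have hτ : insert u s ∈ X := hX _ hρ _ (Finset.subset_insert _ _)
    have hσ : insert v s ∈ X := hX _ hρ _ (Finset.insert_subset_insert _ (Finset.subset_insert _ _))
    have e1 := bd_insert n X w (k+1) (insert u s) v hvu
    have e2 := bd_insert n X w (k+1) (insert v s) u huv'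
    rw [Finset.insert_comm] at e2
    have e3 := bd_insert n X w k s u hu
    have e4 := bd_insert n X w k s v hv
    rw [if_pos ⟨hρ, by rw [Finset.card_insert_of_notMem hu, hs]⟩] at e1
    rw [if_pos ⟨hρ, by rw [Finset.card_insert_of_notMem hv, hs]⟩] at e2
    rw [if_pos ⟨hτ, hs⟩] at e3
    rw [if_pos ⟨hσ, hs⟩] at e4
    have hz : boundary n X w (k + 1) (insert u s) (insert v (insert u s)) *
        boundary n X w (k + 1) (insert v s) (insert v (insert u s)) +
      boundary n X w k s (insert u s) * boundary n X w k s (insert v s) = 0 := by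
      rw [e1, e2, e3, e4, Finset.filter_insert, Finset.filter_insert]
      rcases lt_or_gt_of_ne huv with h | h
      · rw [if_pos h, if_neg h.not_gt, Finset.card_insert_of_notMem (by simp [hu]), pow_succ]
        ring
      · rw [if_pos h, if_neg h.not_gt, Finset.card_insert_of_notMem (by simp [hv]), pow_succ]
        ring
    rw [hz, abs_zero]
    exact mul_nonneg (hw u).le (hw v).le
  · have e1 := bd_insert n X w (k+1) (insert u s) v hvu
    rw [if_neg (fun h => hρ h.1)] at e1
    rw [e1, zero_mul, zero_add, abs_mul]
    exact mul_le_mul (bd_abs n X w hw k s u hu) (bd_abs n X w hw k s v hv) (abs_nonneg _) (hw u).le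

lemma full_entry (n : ℕ) (X : Finset (Finset (Fin n))) (hX : IsComplex n X)
    (w : Fin n → ℝ) (hw : ∀ v, 0 < w v) (k : ℕ) (σ τ : Finset (Fin n)) :
    |fullLap n X w k τ σ| ≤ (if τ = σ then ∑ v, w v ^ 2 else 0) +
      ∑ u ∈ σᶜ, ∑ v ∈ σ, if τ = insert u (σ.erase v) then w u * w v else 0 := by
  have hnn1 : ∀ u, ∀ v ∈ σ, (0:ℝ) ≤ if τ = insert u (σ.erase v) then w u * w v else 0 := by
    intro u v _
    split_ifs
    · exact mul_nonneg (hw u).le (hw v).le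
    · exact le_rfl
  have hnn2 : ∀ u ∈ σᶜ, (0:ℝ) ≤ ∑ v ∈ σ, if τ = insert u (σ.erase v) then w u * w v else 0 :=
    fun u _ => Finset.sum_nonneg (hnn1 u)
  by_cases h : τ = σ
  · subst h
    rw [if_pos rfl]
    exact le_add_of_le_of_nonneg (full_diag n X w hw k τ) (Finset.sum_nonneg hnn2)
  rw [if_neg h, zero_add]
  by_cases hz : fullLap n X w k τ σ = 0
  · rw [hz, abs_zero]; exact Finset.sum_nonneg hnn2
  have main : ∃ s u v, u ∉ s ∧ v ∉ s ∧ u ≠ v ∧ s.card = k ∧ τ = insert u s ∧ σ = insert v s := by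
    by_cases hd : downLap n X w k τ σ = 0
    · have hup : upLap n X w k τ σ ≠ 0 := by
        intro h0; apply hz; rw [fullLap, Matrix.add_apply, h0, hd, add_zero]
      rw [up_off n X w k σ τ h] at hup
      obtain ⟨h1, h2⟩ := mul_ne_zero_iff.1 hup
      obtain ⟨-, a1, a2, a3, v, hv, hv'⟩ := bd_ne n X w _ _ _ h1
      obtain ⟨-, b1, b2, b3, u, hu, hu'⟩ := bd_ne n X w _ _ _ h2
      have hc := Finset.card_union_add_card_inter τ σ
      have hvσ : v ∈ σ := by
        have : v ∈ τ ∪ σ := by rw [hv']; exact Finset.mem_insert_self _ _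
        exact (Finset.mem_union.1 this).resolve_left hv
      have huτ : u ∈ τ := by
        have : u ∈ τ ∪ σ := by rw [hu']; exact Finset.mem_insert_self _ _
        exact (Finset.mem_union.1 this).resolve_right hu
      refine ⟨τ ∩ σ, u, v, ?_, ?_, ?_, by omega, ?_, ?_⟩
      · simp [hu]
      · simp [hv]
      · rintro rfl; exact hv huτ
      · symm
        refine Finset.eq_of_subset_of_card_le
          (Finset.insert_subset huτ Finset.inter_subset_left) ?_
        rw [Finset.card_insert_of_notMem (by simp [hu])]; omega
      · symm
        refine Finset.eq_of_subset_of_card_le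
          (Finset.insert_subset hvσ Finset.inter_subset_right) ?_
        rw [Finset.card_insert_of_notMem (by simp [hv])]; omega
    · rw [down_off n X w k σ τ h] at hd
      obtain ⟨h1, h2⟩ := mul_ne_zero_iff.1 hd
      obtain ⟨-, a1, a2, a3, u, hu, hu'⟩ := bd_ne n X w _ _ _ h1
      obtain ⟨-, b1, b2, b3, v, hv, hv'⟩ := bd_ne n X w _ _ _ h2
      refine ⟨τ ∩ σ, u, v, hu, hv, ?_, a3, hu', hv'⟩
      rintro rfl
      exact h (hu'.trans hv'.symm)
  obtain ⟨s, u, v, hu, hv, huv, hs, rfl, rfl⟩ := main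
  refine (full_adj n X hX w hw k s u v hu hv huv hs).trans ?_
  refine le_trans ?_ (Finset.single_le_sum hnn2 (Finset.mem_compl.2 (by simp [hu, huv] :
    u ∉ insert v s)))
  refine le_trans ?_ (Finset.single_le_sum (hnn1 u) (Finset.mem_insert_self v s))
  rw [Finset.erase_insert hv, if_pos rfl]

lemma full_row (n : ℕ) (X : Finset (Finset (Fin n))) (hX : IsComplex n X)
    (w : Fin n → ℝ) (hw : ∀ v, 0 < w v) (k : ℕ) (σ : Finset (Fin n)) :
    ∑ τ, |fullLap n X w k τ σ| ≤ (∑ v, w v ^ 2) + ∑ u ∈ σᶜ, ∑ v ∈ σ, w u * w v := by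
  refine (Finset.sum_le_sum fun τ _ => full_entry n X hX w hw k σ τ).trans (le_of_eq ?_)
  rw [Finset.sum_add_distrib]
  congr 1
  · simp
  · rw [Finset.sum_comm]
    refine Finset.sum_congr rfl fun u _ => ?_
    rw [Finset.sum_comm]
    simp

lemma schur {ι : Type*} [Fintype ι] [DecidableEq ι] (A : Matrix ι ι ℝ) (K : ℝ) (hK : 0 ≤ K)
    (hs : ∀ i j, A i j = A j i) (hr : ∀ j, ∑ i, |A i j| ≤ K) :
    ‖LinearMap.toContinuousLinearMap (Matrix.toEuclideanLin A)‖ ≤ K := by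
  refine ContinuousLinearMap.opNorm_le_bound _ hK fun x => ?_
  refine le_of_sq_le_sq ?_ (mul_nonneg hK (norm_nonneg _))
  rw [mul_pow, EuclideanSpace.norm_sq_eq, EuclideanSpace.norm_sq_eq]
  simp only [Real.norm_eq_abs, sq_abs]
  have hr' : ∀ i, ∑ j, |A i j| ≤ K := fun i => by
    simpa only [hs i] using hr i
  calc ∑ i, ((LinearMap.toContinuousLinearMap (Matrix.toEuclideanLin A)) x i) ^ 2
      = ∑ i, (∑ j, A i j * x j) ^ 2 := by
        refine Finset.sum_congr rfl fun i _ => ?_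
        rfl
    _ ≤ ∑ i, K * ∑ j, |A i j| * x j ^ 2 := by
        refine Finset.sum_le_sum fun i _ => ?_
        have := Finset.sum_sq_le_sum_mul_sum_of_sq_eq_mul Finset.univ
          (r := fun j => A i j * x j) (f := fun j => |A i j|) (g := fun j => |A i j| * x j ^ 2)
          (fun _ _ => abs_nonneg _) (fun _ _ => mul_nonneg (abs_nonneg _) (sq_nonneg _))
          (fun j _ => by rw [← mul_assoc, abs_mul_abs_self]; ring)
        refine this.trans (mul_le_mul_of_nonneg_right (hr' i)
          (Finset.sum_nonneg fun _ _ => mul_nonneg (abs_nonneg _) (sq_nonneg _)))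
    _ = K * ∑ j, (∑ i, |A i j|) * x j ^ 2 := by
        rw [← Finset.mul_sum, Finset.sum_comm]
        simp only [Finset.sum_mul]
    _ ≤ K * ∑ j, K * x j ^ 2 := by
        refine mul_le_mul_of_nonneg_left (Finset.sum_le_sum fun j _ => ?_) hK
        exact mul_le_mul_of_nonneg_right (hr j) (sq_nonneg _)
    _ = K ^ 2 * ∑ j, x j ^ 2 := by rw [← Finset.mul_sum]; ring

lemma le_K {n : ℕ} (X : Finset (Finset (Fin n))) (k : ℕ) (F : Finset (Fin n) → ℝ)
    (σ : Finset (Fin n)) (hσ : σ ∈ simplices n X k) :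
    F σ ≤ sSup {x : ℝ | ∃ σ ∈ X, σ.card = k + 1 ∧ x = F σ} := by
  refine le_csSup ?_ ⟨σ, (Finset.mem_filter.1 hσ).1, (Finset.mem_filter.1 hσ).2, rfl⟩
  refine Set.Finite.bddAbove ((Set.finite_range F).subset ?_)
  rintro x ⟨s, -, -, rfl⟩
  exact ⟨s, rfl⟩

lemma up_supp (n : ℕ) (X : Finset (Finset (Fin n))) (hX : IsComplex n X)
    (w : Fin n → ℝ) (k : ℕ) (σ τ : Finset (Fin n)) (hσ : σ ∉ simplices n X k) :
    upLap n X w k τ σ = 0 := by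
  rw [upLap, Matrix.mul_apply]
  refine Finset.sum_eq_zero fun ρ _ => ?_
  by_contra h
  obtain ⟨-, h2⟩ := mul_ne_zero_iff.1 h
  obtain ⟨b0, b1, b2, b3, -⟩ := bd_ne n X w _ _ _ h2
  exact hσ (Finset.mem_filter.2 ⟨hX _ b0 _ b2, b3⟩)

lemma down_supp (n : ℕ) (X : Finset (Finset (Fin n)))
    (w : Fin n → ℝ) (k : ℕ) (σ τ : Finset (Fin n)) (hσ : σ ∉ simplices n X k) :
    downLap n X w k τ σ = 0 := by
  rw [downLap, Matrix.mul_apply]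
  refine Finset.sum_eq_zero fun ρ _ => ?_
  by_contra h
  obtain ⟨-, h2⟩ := mul_ne_zero_iff.1 h
  obtain ⟨b0, b1, b2, b3, -⟩ := bd_ne n X w _ _ _ h2
  exact hσ (Finset.mem_filter.2 ⟨b0, b1⟩)

lemma wrap {n : ℕ} (X : Finset (Finset (Fin n))) (k : ℕ) (F : Finset (Fin n) → ℝ)
    (A : Matrix (Finset (Fin n)) (Finset (Fin n)) ℝ) (hne : (simplices n X k).Nonempty)
    (hs : ∀ i j, A i j = A j i) (hsupp : ∀ σ τ, σ ∉ simplices n X k → A τ σ = 0)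
    (hrow : ∀ σ, ∑ τ, |A τ σ| ≤ F σ) :
    (∀ σ ∈ simplices n X k, ∑ τ ∈ simplices n X k, |A τ σ| ≤
      sSup {x : ℝ | ∃ σ ∈ X, σ.card = k + 1 ∧ x = F σ}) ∧
    ‖LinearMap.toContinuousLinearMap (Matrix.toEuclideanLin A)‖ ≤
      sSup {x : ℝ | ∃ σ ∈ X, σ.card = k + 1 ∧ x = F σ} := by
  have hK : ∀ σ ∈ simplices n X k, ∑ τ, |A τ σ| ≤
      sSup {x : ℝ | ∃ σ ∈ X, σ.card = k + 1 ∧ x = F σ} :=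
    fun σ hσ => (hrow σ).trans (le_K X k F σ hσ)
  have h0 : 0 ≤ sSup {x : ℝ | ∃ σ ∈ X, σ.card = k + 1 ∧ x = F σ} := by
    obtain ⟨σ, hσ⟩ := hne
    exact (Finset.sum_nonneg fun _ _ => abs_nonneg _).trans (hK σ hσ)
  refine ⟨fun σ hσ => le_trans ?_ (hK σ hσ), schur A _ h0 hs fun σ => ?_⟩
  · exact Finset.sum_le_univ_sum_of_nonneg fun _ => abs_nonneg _
  · by_cases hσ : σ ∈ simplices n X k
    · exact hK σ hσ
    · simpa [hsupp σ _ hσ] using h0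

/-- The absolute row sums of the Laplacian matrices are bounded by the
normalization constants `K^{up}`, `K^{down}`, `K`, and consequently so are the operator
norms of the Laplacians. -/
theorem laplacian_row_sums_and_norms (n k : ℕ) (X : Finset (Finset (Fin n)))
    (hX : IsComplex n X) (w : Fin n → ℝ) (hw : ∀ v, 0 < w v)
    (hne : (simplices n X k).Nonempty) :
    (∀ σ ∈ simplices n X k,
      (∑ τ ∈ simplices n X k, |upLap n X w k τ σ|) ≤ Kup n X w k ∧
      (∑ τ ∈ simplices n X k, |downLap n X w k τ σ|) ≤ Kdown n X w k ∧
      (∑ τ ∈ simplices n X k, |fullLap n X w k τ σ|) ≤ Kfull n X w k) ∧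
    ‖LinearMap.toContinuousLinearMap (Matrix.toEuclideanLin (upLap n X w k))‖
      ≤ Kup n X w k ∧
    ‖LinearMap.toContinuousLinearMap (Matrix.toEuclideanLin (downLap n X w k))‖
      ≤ Kdown n X w k ∧
    ‖LinearMap.toContinuousLinearMap (Matrix.toEuclideanLin (fullLap n X w k))‖
      ≤ Kfull n X w k := by
  have su : ∀ i j, upLap n X w k i j = upLap n X w k j i := fun i j => by
    simp only [upLap, Matrix.mul_apply, Matrix.transpose_apply, mul_comm]
  have sd : ∀ i j, downLap n X w k i j = downLap n X w k j i := fun i j => by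
    simp only [downLap, Matrix.mul_apply, Matrix.transpose_apply, mul_comm]
  obtain ⟨u1, u2⟩ := wrap X k _ (upLap n X w k) hne su
    (fun σ τ => up_supp n X hX w k σ τ) (up_row n X w hw k)
  obtain ⟨d1, d2⟩ := wrap X k _ (downLap n X w k) hne sd
    (fun σ τ => down_supp n X w k σ τ) (down_row n X w hw k)
  obtain ⟨f1, f2⟩ := wrap X k _ (fullLap n X w k) hne
    (fun i j => by rw [fullLap, Matrix.add_apply, Matrix.add_apply, su, sd])
    (fun σ τ h => by
      rw [fullLap, Matrix.add_apply, up_supp n X hX w k σ τ h, down_supp n X w k σ τ h, add_zero])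
    (full_row n X hX w hw k)
  exact ⟨fun σ hσ => ⟨u1 σ hσ, d1 σ hσ, f1 σ hσ⟩, u2, d2, f2⟩

end QWSC
end
end

section
/- The up-walk transition matrix P^{up} on S_k = X_k^± ∪ {Θ} is row-stochastic: every entry lies in [0,1] and every row sums to 1. -/
open BigOperators Matrix Kronecker

attribute [local instance] Classical.propDecidable

noncomputable section

namespace QWSC

lemma aux_absB (n : ℕ) (X : Finset (Finset (Fin n))) (w : Fin n → ℝ) (hw : ∀ v, 0 < w v)
    (k : ℕ) (τ ρ : Finset (Fin n)) :
    |boundary n X w k τ ρ| =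
      if ρ ∈ X ∧ ρ.card = k + 1 ∧ τ ⊆ ρ ∧ τ.card = k then ∑ v ∈ ρ \ τ, w v else 0 := by
  unfold boundary
  simp only [Matrix.of_apply]
  split_ifs with h
  · obtain ⟨_, h2, h3, h4⟩ := h
    have hc : (ρ \ τ).card = 1 := by
      rw [Finset.card_sdiff_of_subset h3]; omega
    obtain ⟨a, ha⟩ := Finset.card_eq_one.mp hc
    rw [ha]
    simp [abs_mul, abs_of_pos (hw a)]
  · simp

lemma aux_sum_coface (n k : ℕ) (σ : Finset (Fin n)) (hσ : σ.card = k + 1)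
    (F : Finset (Fin n) → ℝ) (hF : ∀ ρ, ¬ (σ ⊆ ρ ∧ ρ.card = k + 2) → F ρ = 0) :
    ∑ ρ, F ρ = ∑ u ∈ σᶜ, F (insert u σ) := by
  have hinj : Set.InjOn (fun u => insert u σ) (σᶜ : Finset (Fin n)) := by
    intro a ha b hb hab
    simp only [Finset.coe_compl, Set.mem_compl_iff, Finset.mem_coe] at ha hb
    have : a ∈ insert b σ := by
      rw [← show insert a σ = insert b σ from hab]; exact Finset.mem_insert_self _ _
    rcases Finset.mem_insert.mp this with h | h
    · exact h
    · exact absurd h ha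
  rw [← Finset.sum_image (f := F) hinj]
  symm
  apply Finset.sum_subset (Finset.subset_univ _)
  intro ρ _ hρ
  apply hF
  rintro ⟨h1, h2⟩
  apply hρ
  have hc : (ρ \ σ).card = 1 := by
    rw [Finset.card_sdiff_of_subset h1]; omega
  obtain ⟨a, ha⟩ := Finset.card_eq_one.mp hc
  have ha' : a ∈ ρ \ σ := by rw [ha]; exact Finset.mem_singleton_self a
  rw [Finset.mem_image]
  refine ⟨a, by simpa using (Finset.mem_sdiff.mp ha').2, ?_⟩
  have := Finset.sdiff_union_of_subset h1
  rw [ha] at this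
  rw [← this, Finset.insert_eq]

lemma aux_sum_face (n k : ℕ) (ρ : Finset (Fin n)) (hρ : ρ.card = k + 2)
    (F : Finset (Fin n) → ℝ) (hF : ∀ τ, ¬ (τ ⊆ ρ ∧ τ.card = k + 1) → F τ = 0) :
    ∑ τ, F τ = ∑ v ∈ ρ, F (ρ.erase v) := by
  have hinj : Set.InjOn (fun v => ρ.erase v) (ρ : Finset (Fin n)) := by
    intro a ha b hb hab
    by_contra hne
    have : a ∈ ρ.erase b := Finset.mem_erase.mpr ⟨hne, ha⟩
    rw [← show ρ.erase a = ρ.erase b from hab] at this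
    exact absurd this (Finset.notMem_erase a ρ)
  rw [← Finset.sum_image (f := F) hinj]
  symm
  apply Finset.sum_subset (Finset.subset_univ _)
  intro τ _ hτ
  apply hF
  rintro ⟨h1, h2⟩
  apply hτ
  have hc : (ρ \ τ).card = 1 := by
    rw [Finset.card_sdiff_of_subset h1]; omega
  obtain ⟨a, ha⟩ := Finset.card_eq_one.mp hc
  have ha' : a ∈ ρ \ τ := by rw [ha]; exact Finset.mem_singleton_self a
  rw [Finset.mem_image]
  refine ⟨a, (Finset.mem_sdiff.mp ha').1, ?_⟩
  show ρ.erase a = τ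
  rw [← Finset.sdiff_singleton_eq_erase, ← ha, Finset.sdiff_sdiff_eq_self h1]

lemma aux_colsum (n k : ℕ) (X : Finset (Finset (Fin n))) (w : Fin n → ℝ) (hw : ∀ v, 0 < w v)
    (ρ : Finset (Fin n)) :
    ∑ τ, |boundary n X w (k + 1) τ ρ| ≤ ∑ v ∈ ρ, w v := by
  by_cases h : ρ ∈ X ∧ ρ.card = k + 2
  · rw [aux_sum_face n k ρ h.2 _ ?_]
    · apply le_of_eq
      apply Finset.sum_congr rfl
      intro v hv
      rw [aux_absB n X w hw, if_pos ⟨h.1, h.2, Finset.erase_subset _ _, by rw [Finset.card_erase_of_mem hv, h.2]; rfl⟩]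
      · have : ρ \ ρ.erase v = {v} := by
          ext x; simp only [Finset.mem_sdiff, Finset.mem_erase, Finset.mem_singleton]
          constructor
          · rintro ⟨a, b⟩; by_contra hx; exact b ⟨hx, a⟩
          · rintro rfl; exact ⟨hv, fun h => h.1 rfl⟩
        rw [this, Finset.sum_singleton]
    · intro τ hτ
      rw [aux_absB n X w hw, if_neg]
      rintro ⟨_, _, a, b⟩; exact hτ ⟨a, b⟩
  · rw [Finset.sum_eq_zero]
    · exact Finset.sum_nonneg fun v _ => (hw v).le
    · intro τ _
      rw [aux_absB n X w hw, if_neg]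
      rintro ⟨a, b, _⟩; exact h ⟨a, b⟩

lemma aux_insert_sdiff (n : ℕ) (σ : Finset (Fin n)) (u : Fin n) (hu : u ∉ σ) :
    insert u σ \ σ = {u} := by
  ext x; simp only [Finset.mem_sdiff, Finset.mem_insert, Finset.mem_singleton]
  constructor
  · rintro ⟨a | a, b⟩
    · exact a
    · exact absurd a b
  · rintro rfl; exact ⟨Or.inl rfl, hu⟩

lemma aux_rowsum (n k : ℕ) (X : Finset (Finset (Fin n))) (w : Fin n → ℝ) (hw : ∀ v, 0 < w v)
    (σ : Finset (Fin n)) (hσ : σ.card = k + 1) :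
    ∑ τ ∈ simplices n X k, |upLap n X w k τ σ| ≤ ∑ u ∈ σᶜ, ∑ v ∈ insert u σ, w u * w v := by
  calc ∑ τ ∈ simplices n X k, |upLap n X w k τ σ|
      ≤ ∑ τ, |upLap n X w k τ σ| :=
        Finset.sum_le_sum_of_subset_of_nonneg (Finset.subset_univ _) fun _ _ _ => abs_nonneg _
    _ ≤ ∑ τ, ∑ ρ, |boundary n X w (k+1) τ ρ| * |boundary n X w (k+1) σ ρ| := by
        apply Finset.sum_le_sum
        intro τ _
        unfold upLap
        rw [Matrix.mul_apply]
        refine (Finset.abs_sum_le_sum_abs _ _).trans (le_of_eq ?_)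
        simp [abs_mul]
    _ = ∑ ρ, |boundary n X w (k+1) σ ρ| * ∑ τ, |boundary n X w (k+1) τ ρ| := by
        rw [Finset.sum_comm]
        apply Finset.sum_congr rfl
        intro ρ _
        rw [Finset.mul_sum]
        exact Finset.sum_congr rfl fun _ _ => mul_comm _ _
    _ ≤ ∑ ρ, |boundary n X w (k+1) σ ρ| * ∑ v ∈ ρ, w v := by
        apply Finset.sum_le_sum
        intro ρ _
        exact mul_le_mul_of_nonneg_left (aux_colsum n k X w hw ρ) (abs_nonneg _)
    _ = ∑ u ∈ σᶜ, |boundary n X w (k+1) σ (insert u σ)| * ∑ v ∈ insert u σ, w v := by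
        apply aux_sum_coface n k σ hσ
        intro ρ hρ
        rw [aux_absB n X w hw, if_neg, zero_mul]
        rintro ⟨_, a, b, _⟩; exact hρ ⟨b, a⟩
    _ ≤ _ := by
        apply Finset.sum_le_sum
        intro u hu
        rw [← Finset.mul_sum]
        apply mul_le_mul_of_nonneg_right
        · rw [aux_absB n X w hw]
          split_ifs
          · rw [aux_insert_sdiff n σ u (by simpa using hu), Finset.sum_singleton]
          · exact (hw u).le
        · exact Finset.sum_nonneg fun v _ => (hw v).le

lemma aux_diag (n k : ℕ) (X : Finset (Finset (Fin n))) (w : Fin n → ℝ) (hw : ∀ v, 0 < w v)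
    (σ : Finset (Fin n)) (hσ : σ.card = k + 1) :
    |upLap n X w k σ σ| = ∑ u ∈ upSet n X σ, w u ^ 2 := by
  have h1 : upLap n X w k σ σ = ∑ ρ, |boundary n X w (k+1) σ ρ| ^ 2 := by
    unfold upLap
    rw [Matrix.mul_apply]
    apply Finset.sum_congr rfl
    intro ρ _
    rw [Matrix.transpose_apply, sq_abs, sq]
  rw [h1, abs_of_nonneg (Finset.sum_nonneg fun _ _ => sq_nonneg _),
    aux_sum_coface n k σ hσ]
  · have h2 : upSet n X σ = σᶜ.filter fun u => insert u σ ∈ X := by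
      ext u; simp [upSet]
    rw [h2, Finset.sum_filter]
    apply Finset.sum_congr rfl
    intro u hu
    have hu' : u ∉ σ := by simpa using hu
    rw [aux_absB n X w hw]
    by_cases h : insert u σ ∈ X
    · rw [if_pos ⟨h, by rw [Finset.card_insert_of_notMem hu', hσ], Finset.subset_insert _ _, hσ⟩,
        if_pos h, aux_insert_sdiff n σ u hu', Finset.sum_singleton]
    · rw [if_neg (fun h' => h h'.1), if_neg h]; simp
  · intro ρ hρ
    rw [aux_absB n X w hw, if_neg]
    · simp
    · rintro ⟨_, a, b, _⟩; exact hρ ⟨b, a⟩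

lemma aux_offdiag (n k : ℕ) (X : Finset (Finset (Fin n))) (w : Fin n → ℝ) (hw : ∀ v, 0 < w v)
    (σ τ : Finset (Fin n)) (hσ : σ.card = k + 1) (hτ : τ.card = k + 1) (hne : σ ≠ τ) :
    |upLap n X w k τ σ| = if σ ∪ τ ∈ X ∧ (σ ∪ τ).card = k + 2 then
      (∑ v ∈ σ \ τ, w v) * (∑ v ∈ τ \ σ, w v) else 0 := by
  have h1 : upLap n X w k τ σ =
      boundary n X w (k+1) τ (σ ∪ τ) * boundary n X w (k+1) σ (σ ∪ τ) := by
    unfold upLap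
    rw [Matrix.mul_apply]
    rw [Finset.sum_eq_single (σ ∪ τ)]
    · rfl
    · intro ρ _ hρ
      rw [Matrix.transpose_apply, ← abs_eq_zero, abs_mul, aux_absB n X w hw, aux_absB n X w hw]
      split_ifs with ha hb
      · exfalso
        apply hρ
        symm
        apply Finset.eq_of_subset_of_card_le (Finset.union_subset hb.2.2.1 ha.2.2.1)
        rw [ha.2.1]
        have : σ ⊂ σ ∪ τ := by
          refine Finset.ssubset_iff_subset_ne.mpr ⟨Finset.subset_union_left, fun h => ?_⟩
          have : τ ⊆ σ := by rw [h]; exact Finset.subset_union_right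
          exact hne (Finset.eq_of_subset_of_card_le this (by omega)).symm
        have := Finset.card_lt_card this
        omega
      all_goals simp
    · intro h; exact absurd (Finset.mem_univ _) h
  rw [h1, abs_mul, aux_absB n X w hw, aux_absB n X w hw, Finset.union_sdiff_right,
    Finset.union_sdiff_left]
  by_cases h : σ ∪ τ ∈ X ∧ (σ ∪ τ).card = k + 2
  · rw [if_pos ⟨h.1, h.2, Finset.subset_union_right, hτ⟩,
      if_pos ⟨h.1, h.2, Finset.subset_union_left, hσ⟩, if_pos h]
  · rw [if_neg (fun h' => h ⟨h'.1, h'.2.1⟩), if_neg h, zero_mul]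

lemma aux_upAdj (n k : ℕ) (X : Finset (Finset (Fin n)))
    (σ : OSimp n) (τ : Finset (Fin n)) (hσ : σ.1.card = k + 1) (hτ : τ.card = k + 1)
    (hne : σ.1 ≠ τ) (h : σ.1 ∪ τ ∈ X ∧ (σ.1 ∪ τ).card = k + 2) :
    ∃ c : Bool, ∀ b, UpAdj n X σ (τ, b) ↔ b = c := by
  have c1 : (τ \ σ.1).card = 1 := by
    have := Finset.card_sdiff_of_subset (Finset.subset_union_left (s₁ := σ.1) (s₂ := τ))
    rw [Finset.union_sdiff_left] at this; omega
  have c2 : (σ.1 \ τ).card = 1 := by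
    have := Finset.card_sdiff_of_subset (Finset.subset_union_right (s₁ := σ.1) (s₂ := τ))
    rw [Finset.union_sdiff_right] at this; omega
  obtain ⟨x, hx⟩ := Finset.card_eq_one.mp c1
  obtain ⟨y, hy⟩ := Finset.card_eq_one.mp c2
  refine ⟨xor (xor σ.2 (faceFlip n (σ.1 ∪ τ) x)) (faceFlip n (σ.1 ∪ τ) y), fun b => ?_⟩
  unfold UpAdj
  simp only [hx, hy, Finset.mem_singleton, forall_eq]
  have : (σ.1 ≠ τ ∧ σ.1 ∪ τ ∈ X ∧ (σ.1 ∪ τ).card = σ.1.card + 1 ∧ τ.card = σ.1.card) :=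
    ⟨hne, h.1, by omega, by omega⟩
  simp only [this, ne_eq, not_false_eq_true, true_and]
  generalize faceFlip n (σ.1 ∪ τ) x = p
  generalize faceFlip n (σ.1 ∪ τ) y = q
  generalize σ.2 = s
  revert b p q s
  decide

lemma aux_pair (n k : ℕ) (X : Finset (Finset (Fin n))) (w : Fin n → ℝ) (hw : ∀ v, 0 < w v)
    (σ : OSimp n) (hσX : σ.1 ∈ X) (hσ : σ.1.card = k + 1) (τ : Finset (Fin n)) :
    ∑ b : Bool, Pup n X w k (some σ) (some (τ, b)) =
      if τ ∈ simplices n X k then |upLap n X w k τ σ.1| / Kup n X w k else 0 := by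
  by_cases hτ : τ ∈ simplices n X k
  · rw [if_pos hτ]
    have hτ' := Finset.mem_filter.mp hτ
    have hcond : σ.1 ∈ X ∧ σ.1.card = k + 1 ∧ τ ∈ X ∧ τ.card = k + 1 :=
      ⟨hσX, hσ, hτ'.1, hτ'.2⟩
    simp only [Pup, if_pos hcond]
    by_cases he : σ.1 = τ
    · subst he
      rw [aux_diag n k X w hw _ hσ]
      have hA : ∀ b, ¬ UpAdj n X σ (σ.1, b) := fun b h => h.1 rfl
      rw [Finset.sum_eq_single σ.2]
      · simp
      · intro b _ hb
        rw [if_neg, if_neg (hA b)]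
        intro h; apply hb; rw [h]
      · intro h; exact absurd (Finset.mem_univ _) h
    · have hE : ∀ b, ¬ σ = (τ, b) := fun b h => he (by rw [h])
      simp only [if_neg (hE _)]
      rw [aux_offdiag n k X w hw _ _ hσ hτ'.2 he]
      by_cases h : σ.1 ∪ τ ∈ X ∧ (σ.1 ∪ τ).card = k + 2
      · obtain ⟨c, hc⟩ := aux_upAdj n k X σ τ hσ hτ'.2 he h
        simp only [if_pos h, hc]
        rw [Finset.sum_eq_single c]
        · simp
        · intro b _ hb; rw [if_neg hb]
        · intro h; exact absurd (Finset.mem_univ _) h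
      · rw [if_neg h, zero_div]
        apply Finset.sum_eq_zero
        intro b _
        rw [if_neg]
        intro hu
        exact h ⟨hu.2.1, by have h3 : (σ.1 ∪ τ).card = σ.1.card + 1 := hu.2.2.1; omega⟩
  · rw [if_neg hτ]
    apply Finset.sum_eq_zero
    intro b _
    simp only [Pup]
    rw [if_neg]
    rintro ⟨_, _, a, b⟩
    exact hτ (Finset.mem_filter.mpr ⟨a, b⟩)

lemma aux_Kup (n k : ℕ) (X : Finset (Finset (Fin n))) (w : Fin n → ℝ)
    (σ : Finset (Fin n)) (hσX : σ ∈ X) (hσ : σ.card = k + 1) :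
    ∑ u ∈ σᶜ, ∑ v ∈ insert u σ, w u * w v ≤ Kup n X w k := by
  unfold Kup
  apply le_csSup
  · apply Set.Finite.bddAbove
    apply Set.Finite.subset
      (Set.finite_range fun σ : Finset (Fin n) => ∑ u ∈ σᶜ, ∑ v ∈ insert u σ, w u * w v)
    rintro x ⟨s, _, _, rfl⟩
    exact ⟨s, rfl⟩
  · exact ⟨σ, hσX, hσ, rfl⟩

/-- The up-walk transition matrix `P^{up}` on `S_k = X_k^± ∪ {Θ}` is
row-stochastic: every entry lies in `[0,1]` and every row sums to `1`. -/
theorem Pup_row_stochastic (n k : ℕ) (X : Finset (Finset (Fin n))) (hX : IsComplex n X)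
    (w : Fin n → ℝ) (hw : ∀ v, 0 < w v) (hne : (simplices n X k).Nonempty) :
    ∀ σ : SState n, valid n X k σ →
      (∀ σ' : SState n, 0 ≤ Pup n X w k σ σ' ∧ Pup n X w k σ σ' ≤ 1) ∧
      ∑ σ' : SState n, Pup n X w k σ σ' = 1 := by
  have key : ∀ σ : SState n, valid n X k σ →
      (∀ σ' : SState n, 0 ≤ Pup n X w k σ σ') ∧ ∑ σ' : SState n, Pup n X w k σ σ' = 1 := by
    rintro (_ | σ) hv
    · constructor
      · rintro (_ | σ') <;> simp [Pup]
      · rw [Fintype.sum_option]; simp [Pup]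
    · obtain ⟨hσX, hσ⟩ : σ.1 ∈ X ∧ σ.1.card = k + 1 := hv
      have hS : 0 ≤ ∑ τ ∈ simplices n X k, |upLap n X w k τ σ.1| :=
        Finset.sum_nonneg fun _ _ => abs_nonneg _
      have hSK : ∑ τ ∈ simplices n X k, |upLap n X w k τ σ.1| ≤ Kup n X w k :=
        (aux_rowsum n k X w hw σ.1 hσ).trans (aux_Kup n k X w σ.1 hσX hσ)
      have hK : 0 ≤ Kup n X w k := hS.trans hSK
      constructor
      · rintro (_ | σ')
        · simp only [Pup]
          rw [if_pos ⟨hσX, hσ⟩]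
          unfold etaUp
          have := div_le_one_of_le₀ hSK hK
          linarith
        · simp only [Pup]
          split_ifs
          · exact div_nonneg (Finset.sum_nonneg fun _ _ => sq_nonneg _) hK
          · exact div_nonneg (mul_nonneg (Finset.sum_nonneg fun v _ => (hw v).le)
              (Finset.sum_nonneg fun v _ => (hw v).le)) hK
          all_goals exact le_rfl
      · rw [Fintype.sum_option, Fintype.sum_prod_type]
        simp only [aux_pair n k X w hw σ hσX hσ]
        rw [← Finset.sum_filter, Finset.filter_mem_eq_inter, Finset.univ_inter,
          ← Finset.sum_div]
        simp only [Pup]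
        rw [if_pos ⟨hσX, hσ⟩]
        unfold etaUp
        ring
  intro σ hσ
  obtain ⟨h0, h1⟩ := key σ hσ
  refine ⟨fun σ' => ⟨h0 σ', ?_⟩, h1⟩
  rw [← h1]
  exact Finset.single_le_sum (fun i _ => h0 i) (Finset.mem_univ σ')

end QWSC
end
end
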